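/- Let μ be a dominant integral weight and i ∈ {1,…,n−1} with μ_{i+1} > μ_{i+2} (convention μ_{n+1} := 0). With λ₋ = (μ_1,…,μ_{i−1}, μ_{i+1}−1, μ_{i+1}−1, μ_{i+2},…,μ_n), λ₀ = λ₋ + ε_i and λ₊ = λ₀ + ε_{i+1}, the weight λ₀ is the unique dominant integral weight θ satisfying |θ,λ₊| = 1 and |θ,λ₋| = 1. -/

import Mathlib

/-!
`λ₀` is dominant because `μ` is and the strict inequality `μ_{i+2} < μ_{i+1}` leaves room to lower
position `i+1` by one (`domInt_lamMinus_add_single`); the two distances are immediate.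

For uniqueness, `|λ₋,λ₊| = 2 = |θ,λ₋| + |θ,λ₊|`, so the triangle inequality is an equality in every
coordinate and `λ₋ ≤ θ ≤ λ₊` (`between_of_mdist_add`).  Since `λ₊ - λ₋ = ε_i + ε_{i+1}`, the weight
`θ` agrees with `λ₋` away from positions `i` and `i+1`, and `|θ,λ₋| = 1` leaves only
`θ = λ₋ + ε_i` or `θ = λ₋ + ε_{i+1}`.  The latter is not dominant, as `λ₋` takes equal values at
positions `i` and `i+1`.
-/

/-- A weight `λ ∈ ℤ^n` is dominant integral if `λ_1 ≥ λ_2 ≥ … ≥ λ_n ≥ 0`. -/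
def DomInt {n : ℕ} (lam : Fin n → ℤ) : Prop :=
  Antitone lam ∧ ∀ i, 0 ≤ lam i

/-- Manhattan distance `|μ,ν| = ∑ i |μ_i - ν_i|` between weights. -/
def mdist {n : ℕ} (μ ν : Fin n → ℤ) : ℤ :=
  ∑ i : Fin n, |μ i - ν i|

/-- The "shifted" weight `(μ_2, μ_3, …, μ_n, 0)`: at position `i` it takes
the value `μ_{i+1}`, with the convention `μ_{n+1} := 0`. -/
def boxNext {n : ℕ} (μ : Fin n → ℤ) (i : Fin n) : ℤ :=
  if h : (i : ℕ) + 1 < n then μ ⟨(i : ℕ) + 1, h⟩ else 0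

/-- The box `B(μ)`: the set of dominant integral weights `λ` with
`μ_i ≥ λ_i ≥ μ_{i+1}` for `1 ≤ i ≤ n-1` and `μ_n ≥ λ_n ≥ 0`. -/
def InBox {n : ℕ} (μ lam : Fin n → ℤ) : Prop :=
  DomInt lam ∧ ∀ i : Fin n, boxNext μ i ≤ lam i ∧ lam i ≤ μ i

/-- The weight `λ₋ = (μ_1,…,μ_{i-1}, μ_{i+1}-1, μ_{i+1}-1, μ_{i+2},…,μ_n)`
(positions `i` and `i+1`, here `0`-indexed, carry the value `μ_{i+1}-1`). -/
def lamMinus {n : ℕ} (μ : Fin n → ℤ) (i : ℕ) (hi : i + 1 < n) : Fin n → ℤ :=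
  fun j => if (j : ℕ) = i ∨ (j : ℕ) = i + 1 then μ ⟨i + 1, hi⟩ - 1 else μ j

/-- The weight `λ₀ = (μ_1,…,μ_{i-1}, μ_{i+1}, μ_{i+1}-1, μ_{i+2},…,μ_n)`. -/
def lamZero {n : ℕ} (μ : Fin n → ℤ) (i : ℕ) (hi : i + 1 < n) : Fin n → ℤ :=
  fun j => if (j : ℕ) = i then μ ⟨i + 1, hi⟩
    else if (j : ℕ) = i + 1 then μ ⟨i + 1, hi⟩ - 1 else μ j

/-- The weight `λ₊ = (μ_1,…,μ_{i-1}, μ_{i+1}, μ_{i+1}, μ_{i+2},…,μ_n)`. -/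
def lamPlus {n : ℕ} (μ : Fin n → ℤ) (i : ℕ) (hi : i + 1 < n) : Fin n → ℤ :=
  fun j => if (j : ℕ) = i ∨ (j : ℕ) = i + 1 then μ ⟨i + 1, hi⟩ else μ j

/-- The Manhattan interval between weights `L ≤ P` is the order interval: equality in the triangle
inequality for `mdist` forces equality in each coordinate. -/
theorem between_of_mdist_add {n : ℕ} {L P θ : Fin n → ℤ}
    (h : mdist θ L + mdist θ P ≤ ∑ j, (P j - L j)) (j : Fin n) :
    L j ≤ θ j ∧ θ j ≤ P j := by
  have hnn : ∀ k ∈ Finset.univ, 0 ≤ |θ k - L k| + |θ k - P k| - (P k - L k) := by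
    intro k _
    have h1 := le_abs_self (θ k - L k)
    have h2 := neg_le_abs (θ k - P k)
    linarith
  have hsum : ∑ k, (|θ k - L k| + |θ k - P k| - (P k - L k)) = 0 := by
    apply le_antisymm _ (Finset.sum_nonneg hnn)
    rw [Finset.sum_sub_distrib, Finset.sum_add_distrib]
    unfold mdist at h
    linarith
  have hj := (Finset.sum_eq_zero_iff_of_nonneg hnn).1 hsum j (Finset.mem_univ j)
  grind

theorem mdist_add_single_right {n : ℕ} (x : Fin n → ℤ) (a : Fin n) :
    mdist x (x + Pi.single a 1) = 1 := by
  unfold mdist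
  rw [Fintype.sum_eq_single a (fun j hj => by simp [hj])]
  simp

theorem mdist_comm' {n : ℕ} (x y : Fin n → ℤ) : mdist x y = mdist y x :=
  Finset.sum_congr rfl fun _ _ => abs_sub_comm _ _

theorem domInt_lamMinus_add_single {n : ℕ} (μ : Fin n → ℤ) (hμ : DomInt μ) (i : ℕ)
    (hi : i + 1 < n)
    (hstrict : (if h : i + 2 < n then μ ⟨i + 2, h⟩ else 0) < μ ⟨i + 1, hi⟩) :
    DomInt (lamMinus μ i hi + Pi.single ⟨i, Nat.lt_of_succ_lt hi⟩ 1) := by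
  obtain ⟨hanti, hpos⟩ := hμ
  have hval : ∀ j : Fin n,
      (lamMinus μ i hi + Pi.single ⟨i, Nat.lt_of_succ_lt hi⟩ 1 : Fin n → ℤ) j =
        if (j : ℕ) = i then μ ⟨i + 1, hi⟩
        else if (j : ℕ) = i + 1 then μ ⟨i + 1, hi⟩ - 1 else μ j := by
    intro j
    simp only [lamMinus, Pi.add_apply, Pi.single_apply, Fin.ext_iff]
    grind
  have hone : 1 ≤ μ ⟨i + 1, hi⟩ := by
    split_ifs at hstrict with h
    · have := hpos ⟨i + 2, h⟩
      omega
    · omega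
  have hbefore : ∀ j : Fin n, (j : ℕ) ≤ i + 1 → μ ⟨i + 1, hi⟩ ≤ μ j :=
    fun j hj => hanti (Fin.le_def.2 hj)
  have hafter : ∀ j : Fin n, i + 1 < (j : ℕ) → μ j ≤ μ ⟨i + 1, hi⟩ - 1 := by
    intro j hj
    have h2 : i + 2 < n := by omega
    rw [dif_pos h2] at hstrict
    have : μ j ≤ μ ⟨i + 2, h2⟩ := hanti (Fin.le_def.2 hj)
    omega
  constructor
  · intro j k hjk
    have hjk' : (j : ℕ) ≤ k := hjk
    have h0 := hanti hjk
    have h1 := hbefore j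
    have h2 := hafter k
    rw [hval, hval]
    split_ifs <;> omega
  · intro j
    have := hpos j
    rw [hval]
    split_ifs <;> omega

/-- With `λ₀ = λ₋ + ε_i` and `λ₊ = λ₀ + ε_{i+1}`, the weight `λ₀` is the
unique dominant integral weight `θ` with `|θ,λ₊| = 1` and `|θ,λ₋| = 1`. -/
theorem lamZero_unique {n : ℕ} (hn : 2 ≤ n)
    (μ : Fin n → ℤ) (hμ : DomInt μ) (i : ℕ) (hi : i + 1 < n)
    (hstrict : (if h : i + 2 < n then μ ⟨i + 2, h⟩ else 0) < μ ⟨i + 1, hi⟩) :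
    (DomInt (lamMinus μ i hi + Pi.single ⟨i, Nat.lt_of_succ_lt hi⟩ 1) ∧
      mdist (lamMinus μ i hi + Pi.single ⟨i, Nat.lt_of_succ_lt hi⟩ 1)
        (lamMinus μ i hi + Pi.single ⟨i, Nat.lt_of_succ_lt hi⟩ 1 +
          Pi.single ⟨i + 1, hi⟩ 1) = 1 ∧
      mdist (lamMinus μ i hi + Pi.single ⟨i, Nat.lt_of_succ_lt hi⟩ 1)
        (lamMinus μ i hi) = 1) ∧
    ∀ θ : Fin n → ℤ, DomInt θ →
      mdist θ (lamMinus μ i hi + Pi.single ⟨i, Nat.lt_of_succ_lt hi⟩ 1 +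
        Pi.single ⟨i + 1, hi⟩ 1) = 1 →
      mdist θ (lamMinus μ i hi) = 1 →
      θ = lamMinus μ i hi + Pi.single ⟨i, Nat.lt_of_succ_lt hi⟩ 1 := by
  refine ⟨⟨domInt_lamMinus_add_single μ hμ i hi hstrict, mdist_add_single_right _ _, ?_⟩, ?_⟩
  · rw [mdist_comm']
    exact mdist_add_single_right _ _
  intro θ hθ hplus hminus
  have hab : (⟨i, Nat.lt_of_succ_lt hi⟩ : Fin n) ≠ ⟨i + 1, hi⟩ := by simp
  have hle : θ ⟨i + 1, hi⟩ ≤ θ ⟨i, Nat.lt_of_succ_lt hi⟩ :=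
    hθ.1 (Fin.le_def.2 (Nat.le_succ i))
  have hL : lamMinus μ i hi ⟨i, Nat.lt_of_succ_lt hi⟩ = lamMinus μ i hi ⟨i + 1, hi⟩ := by
    simp [lamMinus]
  generalize (⟨i, Nat.lt_of_succ_lt hi⟩ : Fin n) = a at *
  generalize (⟨i + 1, hi⟩ : Fin n) = b at *
  generalize lamMinus μ i hi = L at *
  have hbetween := between_of_mdist_add (L := L) (P := L + Pi.single a 1 + Pi.single b 1) (θ := θ)
    (by
      rw [hplus, hminus, Fintype.sum_eq_add a b hab]
      · simp [hab, hab.symm]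
      · rintro j ⟨hja, hjb⟩
        simp [hja, hjb])
  have hrest : ∀ j, j ≠ a ∧ j ≠ b → θ j = L j := by
    rintro j ⟨hja, hjb⟩
    have := hbetween j
    simp [hja, hjb] at this
    omega
  unfold mdist at hminus
  rw [Fintype.sum_eq_add a b hab (fun j hj => by simp [hrest j hj])] at hminus
  have ha := hbetween a
  have hb := hbetween b
  simp [hab, hab.symm] at ha hb
  rw [abs_of_nonneg (by omega), abs_of_nonneg (by omega)] at hminus
  funext j
  by_cases hja : j = a
  · subst hja
    simp
    omega
  by_cases hjb : j = b
  · subst hjb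
    simp [hja]
    omega
  simp [hja, hrest j ⟨hja, hjb⟩]
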